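/- Let f_FR(n,k) denote the number of Fubini rankings with n competitors having exactly k lucky cars, with the conventions f_FR(0,0) = 1 and f_FR(0,k) = 0 for k ≥ 1. Then for all n ≥ 1 and k ≥ 1, f_FR(n,k) = k·( f_FR(n−1,k) + f_FR(n−1,k−1) ). -/

import Mathlib

/-- A Fubini ranking with `n` competitors: entries are in `[n]` (represented by `Fin n`,
where `i : Fin n` stands for the rank `i.val + 1`), and for every rank `r` occurring among
the entries, the number of indices `j` whose entry is strictly smaller than `r` equals
`r - 1` (i.e. `r.val` in the `Fin n` encoding). -/
def IsFubini {n : ℕ} (α : Fin n → Fin n) : Prop :=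
  ∀ r : Fin n, (∃ i, α i = r) →
    (Finset.univ.filter (fun j => α j < r)).card = (r : ℕ)

/-- The set of lucky cars of `α`: car `i` is lucky iff it is the first occurrence of its
value, i.e. `α j ≠ α i` for all `j < i`. -/
def luckySet {n : ℕ} (α : Fin n → Fin n) : Finset (Fin n) :=
  Finset.univ.filter (fun i => ∀ j, j < i → α j ≠ α i)

/-- The number of lucky cars of `α`. -/
def lucky {n : ℕ} (α : Fin n → Fin n) : ℕ := (luckySet α).card

instance {n : ℕ} : DecidablePred (IsFubini (n := n)) := fun α =>
  inferInstanceAs (Decidable (∀ r : Fin n, (∃ i, α i = r) →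
    (Finset.univ.filter (fun j => α j < r)).card = (r : ℕ)))

/-- The number of Fubini rankings with `n` competitors having exactly `k` lucky cars.
(For `n = 0` this gives `fFR 0 0 = 1` and `fFR 0 k = 0` for `k ≥ 1`.) -/
noncomputable def fFR (n k : ℕ) : ℕ :=
  Nat.card {α : Fin n → Fin n // IsFubini α ∧ lucky α = k}

/-- The number of lucky cars is the number of distinct values. -/
lemma lucky_eq_card_image {n : ℕ} (α : Fin n → Fin n) :
    lucky α = (Finset.univ.image α).card := by
  unfold lucky
  refine Finset.card_bij (fun i _ => α i) (by simp) ?_ ?_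
  · intro i hi j hj hij
    simp only [luckySet, Finset.mem_filter, Finset.mem_univ, true_and] at hi hj
    rcases lt_trichotomy i j with h | h | h
    · exact absurd hij (hj i h)
    · exact h
    · exact absurd hij.symm (hi j h)
  · intro b hb
    obtain ⟨i, -, rfl⟩ := Finset.mem_image.1 hb
    obtain ⟨m, hm, hmin⟩ := (Set.toFinite {j | α j = α i}).exists_minimal ⟨i, rfl⟩
    refine ⟨m, ?_, hm⟩
    simp only [luckySet, Finset.mem_filter, Finset.mem_univ, true_and]
    intro j hj hji
    exact absurd (hmin (hji.trans hm) hj.le) (not_le.2 hj)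

section competitionRank

variable {n k : ℕ}

/-- The number of competitors placed strictly below level `v` by `f`. -/
def countBelow (f : Fin n → Fin k) (v : Fin k) : ℕ :=
  (Finset.univ.filter (fun j => f j < v)).card

lemma countBelow_strictMono {f : Fin n → Fin k} (hf : Function.Surjective f) :
    StrictMono (countBelow f) := by
  intro v w hvw
  obtain ⟨i, rfl⟩ := hf v
  refine Finset.card_lt_card (Finset.ssubset_iff_of_subset ?_ |>.2 ⟨i, by simpa using hvw, by simp⟩)
  intro j
  simpa using fun h => h.trans hvw

lemma countBelow_apply_lt (f : Fin n → Fin k) (i : Fin n) : countBelow f (f i) < n := by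
  have : countBelow f (f i) < (Finset.univ : Finset (Fin n)).card :=
    Finset.card_lt_card
      (Finset.ssubset_iff_of_subset (Finset.subset_univ _) |>.2 ⟨i, by simp, by simp⟩)
  simpa using this

/-- The competition ranking induced by an assignment of competitors to ordered levels. -/
def competitionRank (f : Fin n → Fin k) (i : Fin n) : Fin n :=
  ⟨countBelow f (f i), countBelow_apply_lt f i⟩

lemma competitionRank_lt_iff {f : Fin n → Fin k} (hf : Function.Surjective f) (i j : Fin n) :
    competitionRank f i < competitionRank f j ↔ f i < f j :=
  (countBelow_strictMono hf).lt_iff_lt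

lemma isFubini_competitionRank {f : Fin n → Fin k} (hf : Function.Surjective f) :
    IsFubini (competitionRank f) := by
  rintro r ⟨i, rfl⟩
  simp only [competitionRank_lt_iff hf]
  rfl

lemma lucky_competitionRank {f : Fin n → Fin k} (hf : Function.Surjective f) :
    lucky (competitionRank f) = k := by
  have himage : (Finset.univ.image (competitionRank f)).map Fin.valEmbedding =
      Finset.univ.image (countBelow f) := by
    ext x
    simp [competitionRank, hf.exists]
  rw [lucky_eq_card_image, ← Finset.card_map Fin.valEmbedding, himage,
    Finset.card_image_of_injective _ (countBelow_strictMono hf).injective, Finset.card_fin]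

lemma competitionRank_injOn :
    Set.InjOn (competitionRank (n := n) (k := k)) {f | Function.Surjective f} := by
  intro f hf g hg hfg
  have hval (i : Fin n) : countBelow f (f i) = countBelow g (g i) :=
    congrArg Fin.val (congrFun hfg i)
  have hbelow : countBelow f = countBelow g := by
    refine (StrictMono.range_inj (countBelow_strictMono hf) (countBelow_strictMono hg)).1 ?_
    rw [← hf.range_comp, ← hg.range_comp]
    exact congrArg Set.range (funext hval)
  funext i
  refine (countBelow_strictMono hf).injective ?_
  rw [hval i, hbelow]

lemma IsFubini.exists_competitionRank_eq {α : Fin n → Fin n} (hα : IsFubini α)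
    (hk : lucky α = k) : ∃ f : Fin n → Fin k, Function.Surjective f ∧ competitionRank f = α := by
  rw [lucky_eq_card_image] at hk
  let e := (Finset.univ.image α).orderIsoOfFin hk
  have hmem (i : Fin n) : α i ∈ Finset.univ.image α := by simp
  refine ⟨fun i => e.symm ⟨α i, hmem i⟩, ?_, ?_⟩
  · intro v
    obtain ⟨i, -, hi⟩ := Finset.mem_image.1 (e v).2
    exact ⟨i, by simp [hi]⟩
  · funext i
    refine Fin.ext ?_
    simpa [competitionRank, countBelow] using hα (α i) ⟨i, rfl⟩

end competitionRank

/-- Fubini rankings with `k` lucky cars are equinumerous with surjections onto `k` levels. -/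
lemma fFR_eq_card_surjective (n k : ℕ) :
    fFR n k = Nat.card {f : Fin n → Fin k // Function.Surjective f} := by
  refine (Nat.card_eq_of_bijective (fun f : {f : Fin n → Fin k // Function.Surjective f} =>
    (⟨competitionRank f.1, isFubini_competitionRank f.2, lucky_competitionRank f.2⟩ :
      {α : Fin n → Fin n // IsFubini α ∧ lucky α = k})) ⟨?_, ?_⟩).symm
  · intro f g hfg
    exact Subtype.ext (competitionRank_injOn f.2 g.2 (congrArg Subtype.val hfg))
  · rintro ⟨α, hα, hk⟩
    obtain ⟨f, hf, rfl⟩ := hα.exists_competitionRank_eq hk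
    exact ⟨⟨f, hf⟩, rfl⟩

lemma surjective_cons_succAbove {n m : ℕ} (v : Fin (m + 1)) {h : Fin n → Fin m}
    (hh : Function.Surjective h) :
    Function.Surjective (Fin.cons v (v.succAbove ∘ h) : Fin (n + 1) → Fin (m + 1)) := by
  intro w
  rcases eq_or_ne w v with rfl | hw
  · exact ⟨0, rfl⟩
  · obtain ⟨u, rfl⟩ := Fin.exists_succAbove_eq hw
    obtain ⟨i, rfl⟩ := hh u
    exact ⟨i.succ, rfl⟩

lemma surjective_cons {n m : ℕ} (v : Fin m) {g : Fin n → Fin m} (hg : Function.Surjective g) :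
    Function.Surjective (Fin.cons v g : Fin (n + 1) → Fin m) := fun w =>
  (hg w).imp' Fin.succ fun _ hi => hi

/-- A surjection from `Fin (n + 1)` is determined by the value at `0` together with its tail, which
either is surjective or misses exactly that value. -/
lemma card_surjective_succ (n m : ℕ) :
    Nat.card {f : Fin (n + 1) → Fin (m + 1) // Function.Surjective f} =
      (m + 1) * (Nat.card {f : Fin n → Fin (m + 1) // Function.Surjective f} +
        Nat.card {f : Fin n → Fin m // Function.Surjective f}) := by
  let F : Fin (m + 1) × ({f : Fin n → Fin (m + 1) // Function.Surjective f} ⊕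
      {f : Fin n → Fin m // Function.Surjective f}) →
      {f : Fin (n + 1) → Fin (m + 1) // Function.Surjective f} := fun p =>
    Sum.elim (fun g => ⟨Fin.cons p.1 g.1, surjective_cons p.1 g.2⟩)
      (fun h => ⟨Fin.cons p.1 (p.1.succAbove ∘ h.1), surjective_cons_succAbove p.1 h.2⟩) p.2
  have hF : Function.Bijective F := by
    refine ⟨?_, ?_⟩
    · rintro ⟨v, ⟨g, hg⟩ | ⟨h, hh⟩⟩ ⟨v', ⟨g', hg'⟩ | ⟨h', hh'⟩⟩ heq <;>
        simp only [F, Sum.elim_inl, Sum.elim_inr, Subtype.mk.injEq, Fin.cons_inj] at heq <;>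
        obtain ⟨rfl, htail⟩ := heq
      · subst htail
        rfl
      · obtain ⟨i, hi⟩ := hg v
        exact absurd ((congrFun htail i).symm.trans hi) (Fin.succAbove_ne _ _)
      · obtain ⟨i, hi⟩ := hg' v
        exact absurd ((congrFun htail i).trans hi) (Fin.succAbove_ne _ _)
      · obtain rfl := Fin.succAbove_right_injective.comp_left htail
        rfl
    · rintro ⟨f, hf⟩
      by_cases hg : Function.Surjective (Fin.tail f)
      · exact ⟨⟨f 0, Sum.inl ⟨_, hg⟩⟩, Subtype.ext (Fin.cons_self_tail f)⟩
      · have htail {w : Fin (m + 1)} (hw : w ≠ f 0) : ∃ i, Fin.tail f i = w := by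
          obtain ⟨i, rfl⟩ := hf w
          obtain ⟨j, rfl⟩ := Fin.exists_succ_eq.2 (ne_of_apply_ne f hw)
          exact ⟨j, rfl⟩
        have hne (i : Fin n) : Fin.tail f i ≠ f 0 := fun hi => hg fun w => by
          rcases eq_or_ne w (f 0) with rfl | hw
          · exact ⟨i, hi⟩
          · exact htail hw
        choose h hh using fun i => Fin.exists_succAbove_eq (hne i)
        refine ⟨⟨f 0, Sum.inr ⟨h, fun u => ?_⟩⟩, Subtype.ext ?_⟩
        · obtain ⟨i, hi⟩ := htail (Fin.succAbove_ne (f 0) u)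
          exact ⟨i, Fin.succAbove_right_injective ((hh i).trans hi)⟩
        · change Fin.cons (f 0) ((f 0).succAbove ∘ h) = f
          rw [show (f 0).succAbove ∘ h = Fin.tail f from funext hh, Fin.cons_self_tail]
  rw [← Nat.card_eq_of_bijective F hF, Nat.card_prod, Nat.card_sum, Nat.card_fin]

/-- For `n, k ≥ 1`, `f_FR(n,k) = k·(f_FR(n−1,k) + f_FR(n−1,k−1))`. -/
theorem fFR_recurrence (n k : ℕ) (hn : 1 ≤ n) (hk : 1 ≤ k) :
    fFR n k = k * (fFR (n - 1) k + fFR (n - 1) (k - 1)) := by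
  obtain ⟨n, rfl⟩ := Nat.exists_eq_add_of_le' hn
  obtain ⟨k, rfl⟩ := Nat.exists_eq_add_of_le' hk
  simp only [Nat.add_sub_cancel, fFR_eq_card_surjective, card_surjective_succ]
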